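/- Let (σ_j)_{j≥1} be a sequence of positive real numbers, ω_j = ω(σ_j), and let n_d(ε) be the average case approximation complexity built from (ω_j). Then the following three conditions are equivalent: (i) for every ε ∈ (0,1), n_d(ε) → ∞ as d → ∞; (ii) the series Σ_{j=1}^∞ ω_j diverges; (iii) the series Σ_{j=1}^∞ σ_j^{-2} diverges. -/

import Mathlib

open Filter Set

/-- `ω(σ) = (1 + (σ²/2)(1 + √(1 + 4/σ²)))⁻¹`. -/
noncomputable def omegaFn (σ : ℝ) : ℝ :=
  (1 + σ ^ 2 / 2 * (1 + Real.sqrt (1 + 4 / σ ^ 2)))⁻¹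

/-- The average case approximation complexity `n_d(ε)` built from the sequence `ω`:
the minimal number `n ≥ 1` such that some finite set `S` of multi-indices with `|S| ≤ n`
captures all but `ε²` of the total mass of the eigenvalues
`λ_d(k) = ∏_{j<d} (1 - ω_j) ω_j^{k_j}`, `k : Fin d → ℕ`. -/
noncomputable def avgComplexity (ω : ℕ → ℝ) (d : ℕ) (ε : ℝ) : ℕ :=
  sInf {n : ℕ | 1 ≤ n ∧ ∃ S : Finset (Fin d → ℕ), S.card ≤ n ∧
    ∑' k : {k : Fin d → ℕ // k ∉ S}, ∏ j : Fin d, (1 - ω j.1) * ω j.1 ^ k.1 j ≤ ε ^ 2}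

/-!
Every eigenvalue is at most `λ_d(0) = P_d := ∏_{j<d} (1 - ω_j)`, so capturing mass `1 - ε²` takes
at least `(1 - ε²) / P_d` of them, while `λ_d(0)` alone suffices once `1 - ε² ≤ P_d`. As `d → ∞`,
`P_d` tends to `0` if `∑ ω_j` diverges and stays bounded away from `0` if it converges. Finally,
`ω(σ)` is the root in `(0, 1)` of `(1 - ω)² = σ² ω`, so `σ⁻² = ω / (1 - ω)²`, which is at least `ω`
and asymptotically equivalent to it as `ω → 0`.
-/

open scoped Topology

section InfiniteProducts

variable {ι : Type*}

theorem hasSum_prod_pi_of_nonneg {d : ℕ} {κ : Fin d → Type*} {f : ∀ j, κ j → ℝ} {a : Fin d → ℝ}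
    (hf₀ : ∀ j i, 0 ≤ f j i) (hf : ∀ j, HasSum (f j) (a j)) :
    HasSum (fun k : ∀ j, κ j ↦ ∏ j, f j (k j)) (∏ j, a j) := by
  induction d with
  | zero => simp
  | succ d ih =>
    have hhead := hf 0
    have htail := ih (fun j ↦ hf₀ j.succ) fun j ↦ hf j.succ
    have hsummable := hhead.summable.mul_of_nonneg htail.summable (hf₀ 0)
      fun k ↦ Finset.prod_nonneg fun j _ ↦ hf₀ j.succ (k j)
    rw [← (Fin.consEquiv κ).hasSum_iff, Fin.prod_univ_succ]
    simpa [Function.comp_def, Fin.prod_univ_succ, Fin.consEquiv]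
      using hhead.mul htail hsummable

theorem tendsto_prod_one_sub_nhds_zero {ω : ℕ → ℝ} (hω₀ : ∀ j, 0 ≤ ω j) (hω₁ : ∀ j, ω j ≤ 1)
    (hω : ¬ Summable ω) :
    Tendsto (fun d ↦ ∏ j ∈ Finset.range d, (1 - ω j)) atTop (𝓝 0) := by
  have hsum : Tendsto (fun d ↦ ∑ j ∈ Finset.range d, ω j) atTop atTop :=
    (not_summable_iff_tendsto_nat_atTop_of_nonneg hω₀).1 hω
  have hprod_le (d : ℕ) :
      ∏ j ∈ Finset.range d, (1 - ω j) ≤ Real.exp (-∑ j ∈ Finset.range d, ω j) := by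
    rw [← Finset.sum_neg_distrib, Real.exp_sum]
    exact Finset.prod_le_prod (fun j _ ↦ sub_nonneg.2 (hω₁ j))
      fun j _ ↦ Real.one_sub_le_exp_neg (ω j)
  exact squeeze_zero (fun d ↦ Finset.prod_nonneg fun j _ ↦ sub_nonneg.2 (hω₁ j)) hprod_le
    (Real.tendsto_exp_neg_atTop_nhds_zero.comp hsum)

theorem exists_pos_forall_le_prod_one_sub {ω : ι → ℝ} (hω₀ : ∀ i, 0 ≤ ω i) (hω₁ : ∀ i, ω i < 1)
    (hω : Summable ω) : ∃ c > 0, ∀ s : Finset ι, c ≤ ∏ i ∈ s, (1 - ω i) := by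
  have hpos (i : ι) : 0 < 1 - ω i := sub_pos.2 (hω₁ i)
  have hlog : Summable fun i ↦ Real.log (1 - ω i) := by
    simpa [sub_eq_add_neg] using Real.summable_log_one_add_of_summable hω.neg
  have hlog_nonpos (i : ι) : Real.log (1 - ω i) ≤ 0 :=
    Real.log_nonpos (hpos i).le (sub_le_self 1 (hω₀ i))
  refine ⟨Real.exp (∑' i, Real.log (1 - ω i)), Real.exp_pos _, fun s ↦ ?_⟩
  calc Real.exp (∑' i, Real.log (1 - ω i))
      ≤ Real.exp (∑ i ∈ s, Real.log (1 - ω i)) :=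
        Real.exp_le_exp.2 <| by
          simpa [tsum_neg] using hlog.neg.sum_le_tsum s fun i _ ↦ neg_nonneg.2 (hlog_nonpos i)
    _ = ∏ i ∈ s, (1 - ω i) := by simp only [Real.exp_sum, Real.exp_log (hpos _)]

theorem summable_div_one_sub_sq_iff {f : ι → ℝ} (hf₀ : ∀ i, 0 ≤ f i) (hf₁ : ∀ i, f i < 1) :
    Summable (fun i ↦ f i / (1 - f i) ^ 2) ↔ Summable f := by
  constructor
  · intro h
    refine h.of_nonneg_of_le hf₀ fun i ↦ le_div_self (hf₀ i) (pow_pos (sub_pos.2 (hf₁ i)) 2) ?_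
    exact pow_le_one₀ (sub_nonneg.2 (hf₁ i).le) (sub_le_self 1 (hf₀ i))
  · intro h
    have hfactor : Tendsto (fun i ↦ ((1 - f i) ^ 2)⁻¹) cofinite (𝓝 1) := by
      simpa using ((h.tendsto_cofinite_zero.const_sub 1).pow 2).inv₀ (by norm_num)
    have hequiv : Asymptotics.IsEquivalent cofinite (fun i ↦ f i / (1 - f i) ^ 2) f :=
      Asymptotics.isEquivalent_iff_exists_eq_mul.2
        ⟨_, hfactor, .of_eq <| funext fun i ↦ div_eq_inv_mul _ _⟩
    exact hequiv.summable_iff.2 h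

end InfiniteProducts

section Eigenvalues

/-- The eigenvalue `λ_d(k) = ∏_{j<d} (1 - ω_j) ω_j^{k_j}` of the covariance operator of the tensor
product random field; as in `avgComplexity`, both `j` and `k_j` start from `0` rather than `1`. -/
noncomputable def tensorEigenvalue (ω : ℕ → ℝ) {d : ℕ} (k : Fin d → ℕ) : ℝ :=
  ∏ j : Fin d, (1 - ω j) * ω j ^ k j

variable {ω : ℕ → ℝ} {d : ℕ}

theorem tensorEigenvalue_zero :
    tensorEigenvalue ω (0 : Fin d → ℕ) = ∏ j ∈ Finset.range d, (1 - ω j) := by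
  simp [tensorEigenvalue, Fin.prod_univ_eq_prod_range (fun j ↦ 1 - ω j)]

theorem tensorEigenvalue_le_prod_one_sub (hω₀ : ∀ j, 0 ≤ ω j) (hω₁ : ∀ j, ω j ≤ 1)
    (k : Fin d → ℕ) : tensorEigenvalue ω k ≤ ∏ j ∈ Finset.range d, (1 - ω j) := by
  rw [← Fin.prod_univ_eq_prod_range fun j ↦ 1 - ω j]
  refine Finset.prod_le_prod
    (fun j _ ↦ mul_nonneg (sub_nonneg.2 (hω₁ j)) (pow_nonneg (hω₀ j) _)) fun j _ ↦ ?_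
  exact mul_le_of_le_one_right (sub_nonneg.2 (hω₁ j)) (pow_le_one₀ (hω₀ j) (hω₁ j))

theorem hasSum_tensorEigenvalue (hω₀ : ∀ j, 0 ≤ ω j) (hω₁ : ∀ j, ω j < 1) :
    HasSum (fun k : Fin d → ℕ ↦ tensorEigenvalue ω k) 1 := by
  have hgeom (j : Fin d) : HasSum (fun n ↦ (1 - ω j) * ω j ^ n) 1 := by
    simpa [mul_inv_cancel₀ (sub_pos.2 (hω₁ j)).ne']
      using (hasSum_geometric_of_lt_one (hω₀ j) (hω₁ j)).mul_left (1 - ω j)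
  simpa [tensorEigenvalue] using hasSum_prod_pi_of_nonneg
    (fun j n ↦ mul_nonneg (sub_nonneg.2 (hω₁ j).le) (pow_nonneg (hω₀ j) n)) hgeom

theorem tsum_tensorEigenvalue_notMem (hω₀ : ∀ j, 0 ≤ ω j) (hω₁ : ∀ j, ω j < 1)
    (S : Finset (Fin d → ℕ)) :
    ∑' k : {k // k ∉ S}, tensorEigenvalue ω k.1 = 1 - ∑ k ∈ S, tensorEigenvalue ω k := by
  have h := hasSum_tensorEigenvalue (d := d) hω₀ hω₁
  rw [← h.tsum_eq, ← h.summable.sum_add_tsum_subtype_compl S, add_sub_cancel_left]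

end Eigenvalues

section Complexity

variable {ω : ℕ → ℝ} {d : ℕ} {ε : ℝ}

theorem avgComplexity_le_card {S : Finset (Fin d → ℕ)} (hS : S.Nonempty)
    (htail : ∑' k : {k // k ∉ S}, tensorEigenvalue ω k.1 ≤ ε ^ 2) :
    avgComplexity ω d ε ≤ S.card :=
  Nat.sInf_le ⟨hS.card_pos, S, le_rfl, htail⟩

variable (ω d) in
theorem exists_card_le_avgComplexity (hε : ε ≠ 0) :
    ∃ S : Finset (Fin d → ℕ), S.card ≤ avgComplexity ω d ε ∧
      ∑' k : {k // k ∉ S}, tensorEigenvalue ω k.1 ≤ ε ^ 2 := by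
  have htail := tendsto_tsum_compl_atTop_zero fun k : Fin d → ℕ ↦ tensorEigenvalue ω k
  obtain ⟨S, hS⟩ := (htail.eventually_le_const (sq_pos_of_ne_zero hε)).exists
  -- A witness is needed for the infimum to be attained, as `sInf ∅ = 0` in `ℕ`.
  have hmem : avgComplexity ω d ε ∈ {n | 1 ≤ n ∧ ∃ S : Finset (Fin d → ℕ), S.card ≤ n ∧
      ∑' k : {k // k ∉ S}, tensorEigenvalue ω k.1 ≤ ε ^ 2} :=
    Nat.sInf_mem ⟨S.card + 1, Nat.le_add_left 1 _, S, Nat.le_succ _, hS⟩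
  exact hmem.2

theorem one_sub_sq_le_avgComplexity_mul_prod (hω₀ : ∀ j, 0 ≤ ω j) (hω₁ : ∀ j, ω j < 1)
    (hε : ε ≠ 0) :
    1 - ε ^ 2 ≤ avgComplexity ω d ε * ∏ j ∈ Finset.range d, (1 - ω j) := by
  obtain ⟨S, hcard, htail⟩ := exists_card_le_avgComplexity ω d hε
  rw [tsum_tensorEigenvalue_notMem hω₀ hω₁] at htail
  calc 1 - ε ^ 2 ≤ ∑ k ∈ S, tensorEigenvalue ω k := by linarith
    _ ≤ S.card * ∏ j ∈ Finset.range d, (1 - ω j) := by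
      simpa using Finset.sum_le_card_nsmul S _ _
        fun k _ ↦ tensorEigenvalue_le_prod_one_sub hω₀ (fun j ↦ (hω₁ j).le) k
    _ ≤ avgComplexity ω d ε * ∏ j ∈ Finset.range d, (1 - ω j) := by
      gcongr
      exact Finset.prod_nonneg fun j _ ↦ sub_nonneg.2 (hω₁ j).le

theorem avgComplexity_le_one (hω₀ : ∀ j, 0 ≤ ω j) (hω₁ : ∀ j, ω j < 1)
    (hε : 1 - ε ^ 2 ≤ ∏ j ∈ Finset.range d, (1 - ω j)) : avgComplexity ω d ε ≤ 1 := by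
  refine avgComplexity_le_card (Finset.singleton_nonempty 0) ?_
  rw [tsum_tensorEigenvalue_notMem hω₀ hω₁, Finset.sum_singleton, tensorEigenvalue_zero]
  linarith

theorem tendsto_avgComplexity_atTop (hω₀ : ∀ j, 0 ≤ ω j) (hω₁ : ∀ j, ω j < 1)
    (hω : ¬ Summable ω) (hε : ε ∈ Ioo (0 : ℝ) 1) :
    Tendsto (fun d ↦ avgComplexity ω d ε) atTop atTop := by
  have hprod_pos (d : ℕ) : 0 < ∏ j ∈ Finset.range d, (1 - ω j) :=
    Finset.prod_pos fun j _ ↦ sub_pos.2 (hω₁ j)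
  have hprod : Tendsto (fun d ↦ ∏ j ∈ Finset.range d, (1 - ω j)) atTop (𝓝[>] 0) :=
    tendsto_nhdsWithin_iff.2
      ⟨tendsto_prod_one_sub_nhds_zero hω₀ (fun j ↦ (hω₁ j).le) hω, .of_forall hprod_pos⟩
  have hmass : 0 < 1 - ε ^ 2 := sub_pos.2 (pow_lt_one₀ hε.1.le hε.2 two_ne_zero)
  have hlower : Tendsto (fun d ↦ (1 - ε ^ 2) * (∏ j ∈ Finset.range d, (1 - ω j))⁻¹) atTop atTop :=
    hprod.inv_tendsto_nhdsGT_zero.const_mul_atTop hmass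
  refine tendsto_natCast_atTop_iff.1 (tendsto_atTop_mono (fun d ↦ ?_) hlower)
  exact (mul_inv_le_iff₀ (hprod_pos d)).2
    (one_sub_sq_le_avgComplexity_mul_prod hω₀ hω₁ hε.1.ne')

theorem exists_forall_avgComplexity_le_one (hω₀ : ∀ j, 0 ≤ ω j) (hω₁ : ∀ j, ω j < 1)
    (hω : Summable ω) : ∃ ε ∈ Ioo (0 : ℝ) 1, ∀ d, avgComplexity ω d ε ≤ 1 := by
  obtain ⟨c, hc, hprod⟩ := exists_pos_forall_le_prod_one_sub hω₀ hω₁ hω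
  have hnear : ∀ᶠ ε : ℝ in 𝓝[<] 1, 1 - ε ^ 2 < c := by
    have hcont : Continuous fun ε : ℝ ↦ 1 - ε ^ 2 := by fun_prop
    exact hcont.continuousWithinAt.eventually_lt_const (by simpa using hc)
  obtain ⟨ε, hεc, hε⟩ := (hnear.and (Ioo_mem_nhdsLT one_pos)).exists
  exact ⟨ε, hε, fun d ↦ avgComplexity_le_one hω₀ hω₁ (hεc.le.trans (hprod _))⟩

theorem forall_tendsto_avgComplexity_iff_not_summable (hω₀ : ∀ j, 0 ≤ ω j) (hω₁ : ∀ j, ω j < 1) :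
    (∀ ε ∈ Ioo (0 : ℝ) 1, Tendsto (fun d ↦ avgComplexity ω d ε) atTop atTop) ↔ ¬ Summable ω := by
  refine ⟨fun h hω ↦ ?_, fun hω ε ↦ tendsto_avgComplexity_atTop hω₀ hω₁ hω⟩
  obtain ⟨ε, hε, hle⟩ := exists_forall_avgComplexity_le_one hω₀ hω₁ hω
  obtain ⟨d, hd⟩ := ((h ε hε).eventually_gt_atTop 1).exists
  exact (hle d).not_gt hd

end Complexity

section Omega

theorem omegaFn_pos (s : ℝ) : 0 < omegaFn s := by
  unfold omegaFn
  positivity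

variable {s : ℝ}

theorem omegaFn_lt_one (hs : s ≠ 0) : omegaFn s < 1 := by
  refine inv_lt_one_of_one_lt₀ (lt_add_of_pos_right 1 ?_)
  positivity

theorem one_sub_omegaFn_sq (hs : s ≠ 0) : (1 - omegaFn s) ^ 2 = s ^ 2 * omegaFn s := by
  set v := s ^ 2 / 2 * (1 + √(1 + 4 / s ^ 2)) with hv
  have hv_pos : 0 < v := by positivity
  have homega : omegaFn s = (1 + v)⁻¹ := rfl
  have hsqrt : s ^ 2 * √(1 + 4 / s ^ 2) ^ 2 = s ^ 2 + 4 := by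
    rw [Real.sq_sqrt (by positivity)]
    field_simp
  have hquadratic : v ^ 2 = s ^ 2 * (1 + v) := by
    rw [hv]
    linear_combination s ^ 2 / 4 * hsqrt
  rw [homega]
  field_simp
  linear_combination hquadratic

theorem omegaFn_div_one_sub_sq (hs : s ≠ 0) : omegaFn s / (1 - omegaFn s) ^ 2 = (s ^ 2)⁻¹ := by
  rw [one_sub_omegaFn_sq hs, div_mul_cancel_right₀ (omegaFn_pos s).ne']

theorem summable_omegaFn_iff {ι : Type*} {σ : ι → ℝ} (hσ : ∀ i, σ i ≠ 0) :
    (Summable fun i ↦ omegaFn (σ i)) ↔ Summable fun i ↦ (σ i ^ 2)⁻¹ := by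
  simpa only [omegaFn_div_one_sub_sq (hσ _)] using (summable_div_one_sub_sq_iff
    (fun i ↦ (omegaFn_pos (σ i)).le) fun i ↦ omegaFn_lt_one (hσ i)).symm

end Omega

/-- Criterion of unboundedness: `n_d(ε) → ∞` as `d → ∞` for every `ε ∈ (0,1)` iff
`Σ ω_j = ∞` iff `Σ σ_j⁻² = ∞`. -/
theorem unboundedness_criterion (σ : ℕ → ℝ) (hσ : ∀ j, 0 < σ j) :
    ((∀ ε ∈ Set.Ioo (0 : ℝ) 1,
        Tendsto (fun d : ℕ => avgComplexity (fun j => omegaFn (σ j)) d ε) atTop atTop)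
      ↔ ¬ Summable fun j => omegaFn (σ j))
    ∧ ((¬ Summable fun j => omegaFn (σ j)) ↔ ¬ Summable fun j => ((σ j) ^ 2)⁻¹) := by
  have hσ₀ (j : ℕ) : σ j ≠ 0 := (hσ j).ne'
  exact ⟨forall_tendsto_avgComplexity_iff_not_summable (fun j ↦ (omegaFn_pos (σ j)).le)
    fun j ↦ omegaFn_lt_one (hσ₀ j), not_congr (summable_omegaFn_iff hσ₀)⟩
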